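/- Fix ν > 0 and Δt > 0, and for λ ≥ 0 set σ(λ) := √(λ² + 1/ν) and ρ̃²(λ) := (σ(λ)² + ν⁻¹·sinh²(σ(λ)Δt)) / (σ(λ)·cosh(σ(λ)Δt) + λ·sinh(σ(λ)Δt))². Then the function λ ↦ ρ̃²(λ) is strictly decreasing on [0, ∞) and satisfies ρ̃²(0) = 1; in particular ρ̃²(λ) < 1 for every λ > 0. -/

import Mathlib

noncomputable section

/-- σ := √(λ² + 1/ν). -/
def sig (ν lam : ℝ) : ℝ := Real.sqrt (lam ^ 2 + 1 / ν)


/-- ρ̃²(λ) := (σ(λ)² + ν⁻¹ sinh²(σ(λ)Δt)) / (σ(λ) cosh(σ(λ)Δt) + λ sinh(σ(λ)Δt))². -/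
def rhoTildeSq (ν Δt lam : ℝ) : ℝ :=
  (sig ν lam ^ 2 + ν⁻¹ * Real.sinh (sig ν lam * Δt) ^ 2) /
    (sig ν lam * Real.cosh (sig ν lam * Δt) + lam * Real.sinh (sig ν lam * Δt)) ^ 2

/-!
Since `ν⁻¹ = σ² - λ²`, the numerator of `ρ̃²` factors as
`(σ cosh(σΔt) - λ sinh(σΔt)) (σ cosh(σΔt) + λ sinh(σΔt))`. Cancelling the second factor gives
`ρ̃² = (1 - τ) / (1 + τ)` with `τ = (λ / σ) tanh(σΔt)`. On `[0, ∞)` both factors of `τ` are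
nonnegative and increasing in `λ`, the first one strictly; as `τ` is odd in `λ`, it is strictly
increasing on all of `ℝ`. Finally `τ > -1`, and `x ↦ (1 - x) / (1 + x)` is strictly decreasing
on `(-1, ∞)`.
-/

open Set

theorem strictAntiOn_one_sub_div_one_add {K : Type*} [Field K] [LinearOrder K]
    [IsStrictOrderedRing K] : StrictAntiOn (fun x : K => (1 - x) / (1 + x)) (Ioi (-1)) := by
  intro a ha b hb hab
  have one_add_pos {x : K} (hx : x ∈ Ioi (-1)) : 0 < 1 + x := neg_lt_iff_pos_add'.1 hx
  refine (div_lt_div_iff₀ (one_add_pos hb) (one_add_pos ha)).2 ?_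
  linarith

theorem strictMono_tanh : StrictMono Real.tanh := fun x y hxy => by
  have tanh_mem (z : ℝ) : Real.tanh z ∈ Ioo (-1) 1 := ⟨Real.neg_one_lt_tanh z, Real.tanh_lt_one z⟩
  rwa [← Real.artanh_lt_artanh_iff (tanh_mem x) (tanh_mem y), Real.artanh_tanh, Real.artanh_tanh]

theorem tanh_pos {x : ℝ} (hx : 0 < x) : 0 < Real.tanh x := by
  simpa only [Real.tanh_zero] using strictMono_tanh hx

theorem strictMono_div_sqrt_sq_add {c : ℝ} (hc : 0 < c) :
    StrictMono fun x : ℝ => x / √(x ^ 2 + c) := by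
  have eq_sin_arctan (x : ℝ) : x / √(x ^ 2 + c) = Real.sin (Real.arctan (x / √c)) := by
    have sqrt_mul : √c * √(1 + (x / √c) ^ 2) = √(x ^ 2 + c) := by
      rw [← Real.sqrt_mul hc.le, div_pow, Real.sq_sqrt hc.le]
      congr 1
      field_simp
      ring
    rw [Real.sin_arctan, div_div, sqrt_mul]
  simp only [eq_sin_arctan]
  exact Real.sin_arctan_strictMono.comp fun _ _ h => div_lt_div_of_pos_right h (Real.sqrt_pos.2 hc)

theorem sig_neg (ν lam : ℝ) : sig ν (-lam) = sig ν lam := by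
  rw [sig, sig, neg_sq]

theorem sig_monotoneOn (ν : ℝ) : MonotoneOn (sig ν) (Ici 0) := fun a (ha : 0 ≤ a) b _ hab => by
  unfold sig
  gcongr

theorem sig_pos {ν : ℝ} (hν : 0 < ν) (lam : ℝ) : 0 < sig ν lam := by
  unfold sig
  positivity

theorem sig_sq {ν : ℝ} (hν : 0 < ν) (lam : ℝ) : sig ν lam ^ 2 = lam ^ 2 + ν⁻¹ := by
  rw [sig, Real.sq_sqrt (by positivity), one_div]

theorem abs_lt_sig {ν : ℝ} (hν : 0 < ν) (lam : ℝ) : |lam| < sig ν lam := by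
  refine abs_lt_of_sq_lt_sq ?_ (sig_pos hν lam).le
  rw [sig_sq hν]
  exact lt_add_of_pos_right _ (inv_pos.2 hν)

theorem strictMono_div_sig {ν : ℝ} (hν : 0 < ν) : StrictMono fun lam => lam / sig ν lam :=
  strictMono_div_sqrt_sq_add (one_div_pos.2 hν)

/-- The quantity `τ(λ) = (λ / σ(λ)) tanh(σ(λ)Δt)`, in terms of which
`ρ̃²(λ) = (1 - τ(λ)) / (1 + τ(λ))`. -/
def tanhRatio (ν Δt lam : ℝ) : ℝ := lam / sig ν lam * Real.tanh (sig ν lam * Δt)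

theorem tanhRatio_zero (ν Δt : ℝ) : tanhRatio ν Δt 0 = 0 := by
  rw [tanhRatio, zero_div, zero_mul]

theorem tanhRatio_neg (ν Δt lam : ℝ) : tanhRatio ν Δt (-lam) = -tanhRatio ν Δt lam := by
  rw [tanhRatio, tanhRatio, sig_neg, neg_div, neg_mul]

theorem neg_one_lt_tanhRatio {ν : ℝ} (hν : 0 < ν) (Δt lam : ℝ) : -1 < tanhRatio ν Δt lam := by
  have abs_div_sig_lt_one : |lam / sig ν lam| < 1 := by
    rw [abs_div, abs_of_pos (sig_pos hν lam), div_lt_one (sig_pos hν lam)]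
    exact abs_lt_sig hν lam
  have abs_tanhRatio_lt_one : |tanhRatio ν Δt lam| < 1 := by
    rw [tanhRatio, abs_mul]
    exact mul_lt_one_of_nonneg_of_lt_one_left (abs_nonneg _) abs_div_sig_lt_one
      (Real.abs_tanh_lt_one _).le
  exact (abs_lt.1 abs_tanhRatio_lt_one).1

theorem tanhRatio_strictMonoOn_nonneg {ν Δt : ℝ} (hν : 0 < ν) (hΔt : 0 < Δt) :
    StrictMonoOn (tanhRatio ν Δt) (Ici 0) := by
  intro a (ha : 0 ≤ a) b hb hab
  have sig_le : sig ν a ≤ sig ν b := sig_monotoneOn ν ha hb hab.le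
  calc a / sig ν a * Real.tanh (sig ν a * Δt)
    _ ≤ a / sig ν a * Real.tanh (sig ν b * Δt) :=
      mul_le_mul_of_nonneg_left (strictMono_tanh.monotone (by gcongr))
        (div_nonneg ha (sig_pos hν a).le)
    _ < b / sig ν b * Real.tanh (sig ν b * Δt) :=
      mul_lt_mul_of_pos_right (strictMono_div_sig hν hab) (tanh_pos (mul_pos (sig_pos hν b) hΔt))

theorem tanhRatio_strictMono {ν Δt : ℝ} (hν : 0 < ν) (hΔt : 0 < Δt) : StrictMono (tanhRatio ν Δt) :=
  strictMono_of_odd_strictMonoOn_nonneg (tanhRatio_neg ν Δt) (tanhRatio_strictMonoOn_nonneg hν hΔt)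

theorem sig_mul_cosh_mul_tanhRatio {ν : ℝ} (hν : 0 < ν) (Δt lam : ℝ) :
    sig ν lam * Real.cosh (sig ν lam * Δt) * tanhRatio ν Δt lam =
      lam * Real.sinh (sig ν lam * Δt) := by
  have mul_cosh_ne_zero : sig ν lam * Real.cosh (sig ν lam * Δt) ≠ 0 :=
    (mul_pos (sig_pos hν lam) (Real.cosh_pos _)).ne'
  rw [tanhRatio, Real.tanh_eq_sinh_div_cosh, div_mul_div_comm, mul_div_cancel₀ _ mul_cosh_ne_zero]

theorem sig_sq_add_inv_mul_sinh_sq {ν : ℝ} (hν : 0 < ν) (Δt lam : ℝ) :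
    sig ν lam ^ 2 + ν⁻¹ * Real.sinh (sig ν lam * Δt) ^ 2 =
      (sig ν lam * Real.cosh (sig ν lam * Δt) - lam * Real.sinh (sig ν lam * Δt)) *
        (sig ν lam * Real.cosh (sig ν lam * Δt) + lam * Real.sinh (sig ν lam * Δt)) := by
  linear_combination (-sig ν lam ^ 2) * Real.cosh_sq (sig ν lam * Δt) -
    Real.sinh (sig ν lam * Δt) ^ 2 * sig_sq hν lam

theorem rhoTildeSq_eq_one_sub_div_one_add {ν : ℝ} (hν : 0 < ν) (Δt lam : ℝ) :
    rhoTildeSq ν Δt lam = (1 - tanhRatio ν Δt lam) / (1 + tanhRatio ν Δt lam) := by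
  have sig_ne_zero : sig ν lam ≠ 0 := (sig_pos hν lam).ne'
  have cosh_ne_zero : Real.cosh (sig ν lam * Δt) ≠ 0 := (Real.cosh_pos _).ne'
  have one_add_ne_zero : 1 + tanhRatio ν Δt lam ≠ 0 :=
    (neg_lt_iff_pos_add'.1 (neg_one_lt_tanhRatio hν Δt lam)).ne'
  rw [rhoTildeSq, sig_sq_add_inv_mul_sinh_sq hν, ← sig_mul_cosh_mul_tanhRatio hν]
  field_simp

theorem rhoTildeSq_strictAntiOn_general {ν Δt : ℝ} (hν : 0 < ν) (hΔt : 0 < Δt) :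
    StrictAnti (rhoTildeSq ν Δt) ∧ rhoTildeSq ν Δt 0 = 1 := by
  constructor
  · intro a b hab
    rw [rhoTildeSq_eq_one_sub_div_one_add hν, rhoTildeSq_eq_one_sub_div_one_add hν]
    exact strictAntiOn_one_sub_div_one_add
      (neg_one_lt_tanhRatio hν Δt a) (neg_one_lt_tanhRatio hν Δt b)
      (tanhRatio_strictMono hν hΔt hab)
  · rw [rhoTildeSq_eq_one_sub_div_one_add hν, tanhRatio_zero, sub_zero, add_zero, div_one]

/-- λ ↦ ρ̃²(λ) is strictly decreasing on [0, ∞), ρ̃²(0) = 1, and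
ρ̃²(λ) < 1 for every λ > 0. -/
theorem rhoTildeSq_strictAntiOn (ν Δt : ℝ) (hν : 0 < ν) (hΔt : 0 < Δt) :
    StrictAntiOn (fun lam => rhoTildeSq ν Δt lam) (Set.Ici (0 : ℝ)) ∧
    rhoTildeSq ν Δt 0 = 1 ∧
    ∀ lam : ℝ, 0 < lam → rhoTildeSq ν Δt lam < 1 := by
  obtain ⟨strictAnti, map_zero⟩ := rhoTildeSq_strictAntiOn_general hν hΔt
  exact ⟨strictAnti.strictAntiOn _, map_zero, fun lam hlam => map_zero ▸ strictAnti hlam⟩
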